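/- arXiv:2509.07371 — 2 statements merged into one kernel-verified Lean document; each statement's English description precedes it below -/
import Mathlib

section
/- (Interaction non-resonance condition) For every k₀ > 0, every j ∈ {1, −1}, and all nonzero integers ℓ₁, ℓ₂ with |ℓ₁| + |ℓ₂| ≤ 5, one has (ℓ₁ − ℓ₂)·ω(k₀) − j·ω((ℓ₁ + ℓ₂)·k₀) ≠ 0. -/
noncomputable def qhat (k : ℝ) : ℝ := Real.sqrt ((2 + k ^ 2) / (1 + k ^ 2))

noncomputable def ω (k : ℝ) : ℝ := k * qhat k

/-!
Put `d = ℓ₁ - ℓ₂` and `s = ℓ₁ + ℓ₂`. A resonance forces `|d| |ω k| = |ω (s k)|`, that is,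
`|d| q̂(k) = |s| q̂(s k)`.

* If `ℓ₁` and `ℓ₂` have opposite signs, then `|s| < |d|`. Since `q̂` decreases in `|k|`, one has
  `|ω (s k)| ≤ |s| |ω k| < |d| |ω k|`.
* If they have the same sign, then `|d| + 2 ≤ |s|`. For fixed `|s| ≥ 1` the ratio `q̂(s k) / q̂(k)`
  is at least `(|s| + √2) / (1 + √2 |s|)`, with equality at `k² = √2 / |s|`. As long as `|s| ≤ 8`
  this exceeds `(|s| - 2) / |s|`, hence `|d| |ω k| < |ω (s k)|`. At `|s| = 9` it no longer does, and
  `(ℓ₁, ℓ₂) = (8, 1)` is resonant at some `k`.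
-/

theorem qhat_pos (k : ℝ) : 0 < qhat k :=
  Real.sqrt_pos.mpr (by positivity)

theorem qhat_sq (k : ℝ) : qhat k ^ 2 = (2 + k ^ 2) / (1 + k ^ 2) :=
  Real.sq_sqrt (by positivity)

theorem qhat_le_qhat_of_abs_le_abs {k l : ℝ} (h : |k| ≤ |l|) : qhat l ≤ qhat k := by
  have hsq : k ^ 2 ≤ l ^ 2 := sq_le_sq.mpr h
  refine Real.sqrt_le_sqrt ?_
  rw [div_le_div_iff₀ (by positivity) (by positivity)]
  linarith

theorem abs_add_sqrt_two_mul_qhat_le {s : ℝ} (hs : 1 ≤ |s|) (k : ℝ) :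
    (|s| + √2) * qhat k ≤ (1 + √2 * |s|) * qhat (s * k) := by
  have hq := (qhat_pos k).le
  have hqs := (qhat_pos (s * k)).le
  rw [← pow_le_pow_iff_left₀ (by positivity) (by positivity) two_ne_zero, mul_pow, mul_pow,
    qhat_sq, qhat_sq, mul_pow s k, ← sq_abs s, mul_div_assoc', mul_div_assoc',
    div_le_div_iff₀ (by positivity) (by positivity), ← sub_nonneg]
  have hfactor : (1 + √2 * |s|) ^ 2 * (2 + |s| ^ 2 * k ^ 2) * (1 + k ^ 2)
      - (|s| + √2) ^ 2 * (2 + k ^ 2) * (1 + |s| ^ 2 * k ^ 2)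
      = (|s| ^ 2 - 1) * (√2 - |s| * k ^ 2) ^ 2 := by
    have h2 : √2 ^ 2 = 2 := Real.sq_sqrt zero_le_two
    linear_combination (|s| ^ 2 * ((2 + |s| ^ 2 * k ^ 2) * (1 + k ^ 2))
      - (2 + k ^ 2) * (1 + |s| ^ 2 * k ^ 2) - (|s| ^ 2 - 1)) * h2
  rw [hfactor]
  exact mul_nonneg (sub_nonneg.mpr (one_le_pow₀ hs)) (sq_nonneg _)

theorem abs_omega (k : ℝ) : |ω k| = |k| * qhat k := by
  rw [ω, abs_mul, abs_of_pos (qhat_pos k)]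

theorem abs_omega_pos {k : ℝ} (hk : k ≠ 0) : 0 < |ω k| := by
  rw [abs_omega]
  exact mul_pos (abs_pos.mpr hk) (qhat_pos k)

theorem abs_omega_intCast_mul_le (n : ℤ) (k : ℝ) : |ω (n * k)| ≤ |(n : ℝ)| * |ω k| := by
  rcases eq_or_ne n 0 with rfl | hn
  · simp [ω]
  have hn1 : 1 ≤ |(n : ℝ)| := mod_cast Int.one_le_abs hn
  have hq : qhat (n * k) ≤ qhat k := by
    apply qhat_le_qhat_of_abs_le_abs
    rw [abs_mul]
    exact le_mul_of_one_le_left (abs_nonneg k) hn1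
  rw [abs_omega, abs_omega, abs_mul, mul_assoc]
  gcongr

theorem mul_abs_omega_lt_abs_omega_mul {d s k : ℝ} (hs : 1 ≤ |s|) (hk : k ≠ 0)
    (hd : d * (1 + √2 * |s|) < |s| * (|s| + √2)) : d * |ω k| < |ω (s * k)| := by
  refine lt_of_mul_lt_mul_left ?_ (by positivity : 0 ≤ 1 + √2 * |s|)
  calc (1 + √2 * |s|) * (d * |ω k|) = d * (1 + √2 * |s|) * |ω k| := by ring
    _ < |s| * (|s| + √2) * |ω k| := mul_lt_mul_of_pos_right hd (abs_omega_pos hk)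
    _ = |s| * |k| * ((|s| + √2) * qhat k) := by rw [abs_omega]; ring
    _ ≤ |s| * |k| * ((1 + √2 * |s|) * qhat (s * k)) :=
        mul_le_mul_of_nonneg_left (abs_add_sqrt_two_mul_qhat_le hs k) (by positivity)
    _ = (1 + √2 * |s|) * |ω (s * k)| := by rw [abs_omega, abs_mul]; ring

theorem mul_one_add_sqrt_two_mul_lt_of_le_eight {d s : ℝ} (hd : d + 2 ≤ s) (hs : 0 ≤ s)
    (hs8 : s ≤ 8) : d * (1 + √2 * s) < s * (s + √2) := by
  have one_le_sqrt : 1 ≤ √2 := Real.one_le_sqrt.mpr one_le_two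
  have sqrt_le : √2 ≤ 10 / 7 := Real.sqrt_le_iff.mpr (by norm_num)
  have hprod : 0 ≤ (√2 - 1) * (s * (8 - s)) :=
    mul_nonneg (sub_nonneg.mpr one_le_sqrt) (mul_nonneg hs (sub_nonneg.mpr hs8))
  have hlin : 0 ≤ (10 / 7 - √2) * s := mul_nonneg (sub_nonneg.mpr sqrt_le) hs
  calc d * (1 + √2 * s) ≤ (s - 2) * (1 + √2 * s) := by gcongr; linarith
    _ = s * (s + √2) - ((√2 - 1) * (s * (8 - s)) + (7 - 5 * √2) * s + 2) := by ring
    _ < s * (s + √2) := by linarith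

theorem abs_add_lt_abs_sub_or_abs_sub_add_two_le {a b : ℤ} (ha : a ≠ 0) (hb : b ≠ 0) :
    |a + b| < |a - b| ∨ |a - b| + 2 ≤ |a + b| := by
  grind

theorem abs_sub_mul_abs_omega_ne {ℓ₁ ℓ₂ : ℤ} (h₁ : ℓ₁ ≠ 0) (h₂ : ℓ₂ ≠ 0)
    (h : |ℓ₁| + |ℓ₂| ≤ 8) {k : ℝ} (hk : k ≠ 0) :
    |(ℓ₁ - ℓ₂ : ℝ)| * |ω k| ≠ |ω ((ℓ₁ + ℓ₂ : ℝ) * k)| := by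
  rcases abs_add_lt_abs_sub_or_abs_sub_add_two_le h₁ h₂ with hlt | hle
  · refine ne_of_gt ?_
    calc |ω ((ℓ₁ + ℓ₂ : ℝ) * k)| ≤ |(ℓ₁ + ℓ₂ : ℝ)| * |ω k| :=
          mod_cast abs_omega_intCast_mul_le (ℓ₁ + ℓ₂) k
      _ < |(ℓ₁ - ℓ₂ : ℝ)| * |ω k| :=
          mul_lt_mul_of_pos_right (mod_cast hlt) (abs_omega_pos hk)
  · have hgap : |(ℓ₁ - ℓ₂ : ℝ)| + 2 ≤ |(ℓ₁ + ℓ₂ : ℝ)| := mod_cast hle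
    have hs8 : |(ℓ₁ + ℓ₂ : ℝ)| ≤ 8 := mod_cast (abs_add_le ℓ₁ ℓ₂).trans h
    have hs1 : 1 ≤ |(ℓ₁ + ℓ₂ : ℝ)| := by linarith [abs_nonneg (ℓ₁ - ℓ₂ : ℝ)]
    exact (mul_abs_omega_lt_abs_omega_mul hs1 hk
      (mul_one_add_sqrt_two_mul_lt_of_le_eight hgap (abs_nonneg _) hs8)).ne

theorem stmt3_general {k₀ : ℝ} (hk₀ : k₀ ≠ 0) {j : ℝ} (hj : j = 1 ∨ j = -1)
    {ℓ₁ ℓ₂ : ℤ} (h₁ : ℓ₁ ≠ 0) (h₂ : ℓ₂ ≠ 0) (h : |ℓ₁| + |ℓ₂| ≤ 8) :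
    ((ℓ₁ : ℝ) - (ℓ₂ : ℝ)) * ω k₀ - j * ω (((ℓ₁ : ℝ) + (ℓ₂ : ℝ)) * k₀) ≠ 0 := by
  intro hres
  have habs_j : |j| = 1 := by rcases hj with rfl | rfl <;> simp
  apply abs_sub_mul_abs_omega_ne h₁ h₂ h hk₀
  rw [← abs_mul, sub_eq_zero.mp hres, abs_mul, habs_j, one_mul]

theorem stmt3 (k₀ : ℝ) (hk₀ : 0 < k₀) (j : ℝ) (hj : j = 1 ∨ j = -1)
    (ℓ₁ ℓ₂ : ℤ) (h₁ : ℓ₁ ≠ 0) (h₂ : ℓ₂ ≠ 0) (h : |ℓ₁| + |ℓ₂| ≤ 5) :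
    ((ℓ₁ : ℝ) - (ℓ₂ : ℝ)) * ω k₀ - j * ω (((ℓ₁ : ℝ) + (ℓ₂ : ℝ)) * k₀) ≠ 0 :=
  stmt3_general hk₀.ne' hj h₁ h₂ (h.trans (by norm_num))
end

section
/- (High-frequency non-resonance) For every k₀ > 0 there exist δ > 0 and C > 0 such that for all j, p, σ ∈ {1, −1} and all k, m ∈ ℝ satisfying |k| ≥ δ, |m| ≥ δ, and (|k − m − k₀| ≤ δ or |k − m + k₀| ≤ δ), one has |j·ω(k) + σ·ω(k − m) − p·ω(m)| ≥ C. -/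
/-!
Let `k + l + m = 0`. The largest of `|k|`, `|l|`, `|m|` is the sum `a + b` of the other two, and
since `ω x / x = qhat x` is strictly decreasing for `x > 0`,
`ω a + ω b - ω (a + b) = a (qhat a - qhat (a + b)) + b (qhat b - qhat (a + b)) > 0`.
As `ω` is also increasing, `ω |k|`, `ω |l|`, `ω |m|` satisfy the three strict triangle inequalities,
so `± ω k ± ω l ± ω m` cannot vanish for any choice of signs. If `a` is bounded and `b ≥ δ`, then
`qhat (a + b)` may be replaced by `qhat (a + δ)` in the first term, and compactness in `a` makes
the gap uniform in `b`.
-/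

open Set

section OrderedField

variable {K : Type*} [Field K] [LinearOrder K] [IsStrictOrderedRing K]

lemma le_abs_add_add_of_triangle_gap {c x y z : K} (hx : c ≤ |y| + |z| - |x|)
    (hy : c ≤ |z| + |x| - |y|) (hz : c ≤ |x| + |y| - |z|) : c ≤ |x + y + z| := by
  grind

lemma abs_eq_abs_add_abs_of_add_add_eq_zero {k l m : K} (h : k + l + m = 0) :
    |k| = |l| + |m| ∨ |l| = |m| + |k| ∨ |m| = |k| + |l| := by
  grind

lemma map_add_le_of_antitoneOn_div {f : K → K} (hf : AntitoneOn (fun x ↦ f x / x) (Ioi 0))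
    {a b δ : K} (ha : 0 < a) (hδ : 0 < δ) (hb : δ ≤ b) :
    f (a + b) ≤ a * (f (a + δ) / (a + δ)) + f b := by
  have hb₀ : 0 < b := hδ.trans_le hb
  have hab : 0 < a + b := add_pos ha hb₀
  calc f (a + b) = a * (f (a + b) / (a + b)) + b * (f (a + b) / (a + b)) := by field_simp
    _ ≤ a * (f (a + δ) / (a + δ)) + b * (f b / b) := by
      gcongr ?_ * ?_ + ?_ * ?_
      · exact hf (add_pos ha hδ) hab (by gcongr)
      · exact hf hb₀ hab (le_add_of_nonneg_left ha.le)
    _ = a * (f (a + δ) / (a + δ)) + f b := by rw [mul_div_cancel₀ _ hb₀.ne']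

end OrderedField

section UniformGap

variable {f : ℝ → ℝ} {δ : ℝ}

lemma exists_pos_le_add_sub_map_add (hcont : ContinuousOn f (Ioi 0))
    (hanti : StrictAntiOn (fun x ↦ f x / x) (Ioi 0)) (hδ : 0 < δ) (M : ℝ) :
    ∃ C > 0, ∀ a ∈ Icc δ M, ∀ b ≥ δ, C ≤ f a + f b - f (a + b) := by
  have hpos : ∀ a ∈ Icc δ M, 0 < a := fun a ha ↦ hδ.trans_le ha.1
  have hshift : ∀ a ∈ Icc δ M, 0 < a + δ := fun a ha ↦ add_pos (hpos a ha) hδ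
  have hgap_cont : ContinuousOn (fun a ↦ f a - a * (f (a + δ) / (a + δ))) (Icc δ M) :=
    (hcont.mono hpos).sub <| continuousOn_id.mul <|
      (hcont.comp (by fun_prop) hshift).div (by fun_prop) fun a ha ↦ (hshift a ha).ne'
  have hgap_pos : ∀ a ∈ Icc δ M, 0 < f a - a * (f (a + δ) / (a + δ)) := fun a ha ↦ by
    have hslope := hanti (hpos a ha) (hshift a ha) (lt_add_of_pos_right a hδ)
    rwa [sub_pos, ← lt_div_iff₀' (hpos a ha)]
  obtain ⟨C, hC, hle⟩ := isCompact_Icc.exists_forall_le' hgap_cont hgap_pos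
  refine ⟨C, hC, fun a ha b hb ↦ ?_⟩
  linarith [hle a ha, map_add_le_of_antitoneOn_div hanti.antitoneOn (hpos a ha) hδ hb]

lemma exists_pos_triangle_gap (hmono : MonotoneOn f (Ioi 0)) (hcont : ContinuousOn f (Ioi 0))
    (hanti : StrictAntiOn (fun x ↦ f x / x) (Ioi 0)) (hδ : 0 < δ) (M : ℝ) :
    ∃ C > 0, ∀ k l m : ℝ, k + l + m = 0 → δ ≤ |k| → δ ≤ |l| → δ ≤ |m| → |l| ≤ M →
      C ≤ f |l| + f |m| - f |k| ∧ C ≤ f |m| + f |k| - f |l| ∧ C ≤ f |k| + f |l| - f |m| := by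
  obtain ⟨C, hC, hgap⟩ := exists_pos_le_add_sub_map_add hcont hanti hδ M
  have triangle {a b : ℝ} (ha : δ ≤ a) (haM : a ≤ M) (hb : δ ≤ b) :
      C ≤ f a + f b - f (a + b) ∧ C ≤ f b + f (a + b) - f a ∧ C ≤ f (a + b) + f a - f b := by
    have ha₀ : 0 < a := hδ.trans_le ha
    have hb₀ : 0 < b := hδ.trans_le hb
    have hfa : f a ≤ f (a + b) := hmono ha₀ (add_pos ha₀ hb₀) (by linarith)
    have hfb : f b ≤ f (a + b) := hmono hb₀ (add_pos ha₀ hb₀) (by linarith)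
    have hfab := hgap a ⟨ha, haM⟩ b hb
    exact ⟨hfab, by linarith, by linarith⟩
  refine ⟨C, hC, fun k l m hsum hk hl hm hlM ↦ ?_⟩
  rcases abs_eq_abs_add_abs_of_add_add_eq_zero hsum with h | h | h
  · rw [h]
    exact triangle hl hlM hm
  · obtain ⟨hl', hm', hk'⟩ := triangle hm (by linarith [abs_nonneg k]) hk
    rw [h]
    exact ⟨hk', hl', hm'⟩
  · obtain ⟨hm', hl', hk'⟩ := triangle hl hlM hk
    rw [h, add_comm |k|]
    exact ⟨by linarith, by linarith, by linarith⟩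

end UniformGap

lemma qhat_nonneg (k : ℝ) : 0 ≤ qhat k := Real.sqrt_nonneg _

lemma qhat_abs (k : ℝ) : qhat |k| = qhat k := by simp only [qhat, sq_abs]

lemma continuous_qhat : Continuous qhat :=
  ((by fun_prop : Continuous fun k : ℝ ↦ 2 + k ^ 2).div (by fun_prop)
    fun k ↦ by positivity).sqrt

lemma strictAntiOn_qhat : StrictAntiOn qhat (Ici 0) := by
  intro a ha b _ hab
  have hsq : a ^ 2 < b ^ 2 := pow_lt_pow_left₀ hab ha two_ne_zero
  refine Real.sqrt_lt_sqrt (by positivity) ?_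
  rw [div_lt_div_iff₀ (by positivity) (by positivity)]
  linarith

lemma continuous_ω : Continuous ω := continuous_id.mul continuous_qhat

lemma abs_ω (k : ℝ) : |ω k| = ω |k| := by
  rw [ω, ω, abs_mul, abs_of_nonneg (qhat_nonneg k), qhat_abs]

lemma ω_sq (k : ℝ) : ω k ^ 2 = k ^ 2 + 1 - 1 / (1 + k ^ 2) := by
  have : 1 + k ^ 2 ≠ 0 := by positivity
  rw [ω, mul_pow, qhat, Real.sq_sqrt (by positivity)]
  field_simp
  ring

lemma monotoneOn_ω : MonotoneOn ω (Ici 0) := by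
  intro a (ha : 0 ≤ a) b (hb : 0 ≤ b) hab
  refine le_of_sq_le_sq ?_ (mul_nonneg hb (qhat_nonneg b))
  rw [ω_sq, ω_sq]
  gcongr

lemma strictAntiOn_ω_div : StrictAntiOn (fun k ↦ ω k / k) (Ioi 0) :=
  (strictAntiOn_qhat.mono Ioi_subset_Ici_self).congr fun k (hk : 0 < k) ↦
    (mul_div_cancel_left₀ (qhat k) hk.ne').symm

theorem stmt4_general {δ : ℝ} (hδ : 0 < δ) (M : ℝ) :
    ∃ C > (0 : ℝ), ∀ j p σ : ℝ,
      (j = 1 ∨ j = -1) → (p = 1 ∨ p = -1) → (σ = 1 ∨ σ = -1) →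
      ∀ k m : ℝ, δ ≤ |k| → δ ≤ |m| → δ ≤ |k - m| → |k - m| ≤ M →
        C ≤ |j * ω k + σ * ω (k - m) - p * ω m| := by
  obtain ⟨C, hC, hgap⟩ := exists_pos_triangle_gap (monotoneOn_ω.mono Ioi_subset_Ici_self)
    continuous_ω.continuousOn strictAntiOn_ω_div hδ M
  refine ⟨C, hC, fun j p σ hj hp hσ k m hk hm hl hlM ↦ ?_⟩
  have abs_signed {s : ℝ} (hs : s = 1 ∨ s = -1) (x : ℝ) : |s * ω x| = ω |x| := by
    rw [abs_mul, (abs_eq zero_le_one).2 hs, one_mul, abs_ω]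
  obtain ⟨hgap_k, hgap_l, hgap_m⟩ :=
    hgap (-k) (k - m) m (by ring) (by rwa [abs_neg]) hl hm hlM
  rw [abs_neg] at hgap_k hgap_l hgap_m
  rw [sub_eq_add_neg]
  apply le_abs_add_add_of_triangle_gap <;>
    simpa only [abs_neg, abs_signed hj, abs_signed hp, abs_signed hσ]

theorem stmt4 (k₀ : ℝ) (hk₀ : 0 < k₀) :
    ∃ δ > (0 : ℝ), ∃ C > (0 : ℝ), ∀ j p σ : ℝ,
      (j = 1 ∨ j = -1) → (p = 1 ∨ p = -1) → (σ = 1 ∨ σ = -1) →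
      ∀ k m : ℝ, δ ≤ |k| → δ ≤ |m| →
        (|k - m - k₀| ≤ δ ∨ |k - m + k₀| ≤ δ) →
        C ≤ |j * ω k + σ * ω (k - m) - p * ω m| := by
  obtain ⟨C, hC, hbound⟩ := stmt4_general (half_pos hk₀) (3 * k₀ / 2)
  refine ⟨k₀ / 2, half_pos hk₀, C, hC, fun j p σ hj hp hσ k m hk hm hkm ↦ ?_⟩
  have hwindow : k₀ / 2 ≤ |k - m| ∧ |k - m| ≤ 3 * k₀ / 2 := by grind
  exact hbound j p σ hj hp hσ k m hk hm hwindow.1 hwindow.2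
end
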